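/- Closed-form covariance recursion on a tree (Theorem 2): for all τ ≤ t and every vertex l, the covariance Σ̄_{τ,t}[l] := ⟨H̃_τ[l], H̃_t[l]⟩ satisfies Σ̄_{τ,t}[l] = ⟨w_τ[l], w_t[l]⟩/(ξ_τ[l]·ξ_t[l]) + Σ_{l'∈N(l)} Σ̄_{τ,t,J}[l'→l], where the per-edge covariances Σ̄_{τ,t,j}[l→l'] := ⟨P_{⌊τ/T⌋,j}[l→l'], P_{⌊t/T⌋,j}[l→l']⟩ obey the closed recursion Σ̄_{τ,t,j}[l→l'] = ⟨u_{⌊τ/T⌋}[l], u_{⌊t/T⌋}[l]⟩ + Σ_{l̃'∈N(l)\{l'}} Σ̄_{τ,t,j−1}[l̃'→l] for j ∈ {1,…,J}, with initial condition Σ̄_{τ,t,0}[l→l'] = Σ̄_{τ−T,t−T,J}[l→l'] (equal to 0 when t < T). -/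

import Mathlib

open MeasureTheory SimpleGraph
open scoped RealInnerProductSpace

/-!
Cutting a forest at `l` leaves each neighbour `a` of `l` in a component of its own, the branch of
`a` away from `l`. By induction on rounds and iterations, the message `a → l` is a combination of
vectors owned by the vertices of this branch, because the messages that feed it travel along
subbranches. At a vertex, the local term and the incoming messages are therefore carried by pairwise
disjoint sets of vertices, so they are orthogonal, and inner products of fused signals have no cross
terms.
-/

section Branch

variable {L : Type*} {G : SimpleGraph L} {a b l m : L}

/-- The branch of `a` away from `l`: the vertices that a walk from `a` can reach without visiting
`l`. The message `a → l` only carries information from these vertices. -/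
def branch (G : SimpleGraph L) (a l : L) : Set L :=
  {m | ∃ p : G.Walk a m, l ∉ p.support}

lemma self_mem_branch (hal : a ≠ l) : a ∈ branch G a l :=
  ⟨.nil, by simpa using hal.symm⟩

lemma ne_of_mem_branch (hm : m ∈ branch G a l) : l ≠ m := by
  rintro rfl
  obtain ⟨p, hp⟩ := hm
  exact hp p.end_mem_support

lemma disjoint_branch (hG : G.IsAcyclic) (hla : G.Adj l a) (hlb : G.Adj l b) (hab : a ≠ b) :
    Disjoint (branch G a l) (branch G b l) := by
  rw [Set.disjoint_left]
  rintro m ⟨p, hp⟩ ⟨q, hq⟩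
  let detour : G.Walk l a := .cons hlb (q.append p.reverse)
  have edge_mem_detour : s(l, a) ∈ detour.edges :=
    isBridge_iff_forall_walk_mem_edges.1 (isAcyclic_iff_forall_adj_isBridge.1 hG hla) detour
  rw [Walk.edges_cons, List.mem_cons, Sym2.congr_right] at edge_mem_detour
  have edge_mem_tail := edge_mem_detour.resolve_left hab
  have l_mem_tail := Walk.fst_mem_support_of_mem_edges _ edge_mem_tail
  rw [Walk.mem_support_append_iff, Walk.support_reverse, List.mem_reverse] at l_mem_tail
  exact l_mem_tail.elim hq hp

lemma branch_subset_branch (hG : G.IsAcyclic) (hla : G.Adj l a) (hlb : G.Adj l b) (hab : a ≠ b) :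
    branch G a l ⊆ branch G l b := by
  classical
  rintro m ⟨p, hp⟩
  have b_notMem : b ∉ p.support := fun hb ↦
    Set.disjoint_left.1 (disjoint_branch hG hla hlb hab)
      ⟨p.takeUntil b hb, fun hl ↦ hp (p.support_takeUntil_subset_support hb hl)⟩
      (self_mem_branch hlb.ne')
  exact ⟨.cons hla p, by simp [hlb.ne', b_notMem]⟩

end Branch

section Orthogonality

variable {𝕜 E ι : Type*} [RCLike 𝕜]

lemma inner_add_sum_add_sum [SeminormedAddCommGroup E] [InnerProductSpace 𝕜 E] {S : Finset ι}
    {x y : E} {f g : ι → E} (hxg : ∀ i ∈ S, inner 𝕜 x (g i) = 0)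
    (hfy : ∀ i ∈ S, inner 𝕜 (f i) y = 0)
    (hfg : ∀ i ∈ S, ∀ j ∈ S, i ≠ j → inner 𝕜 (f i) (g j) = 0) :
    inner 𝕜 (x + ∑ i ∈ S, f i) (y + ∑ i ∈ S, g i) =
      inner 𝕜 x y + ∑ i ∈ S, inner 𝕜 (f i) (g i) := by
  have diagonal : inner 𝕜 (∑ i ∈ S, f i) (∑ i ∈ S, g i) = ∑ i ∈ S, inner 𝕜 (f i) (g i) := by
    rw [sum_inner]
    refine Finset.sum_congr rfl fun i hi ↦ ?_
    rw [inner_sum]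
    exact Finset.sum_eq_single_of_mem i hi fun j hj hji ↦ hfg i hi j hj hji.symm
  rw [inner_add_left, inner_add_right, inner_add_right, inner_sum, sum_inner,
    Finset.sum_eq_zero hxg, Finset.sum_eq_zero hfy, diagonal, add_zero, zero_add]

lemma isOrtho_span_range {κ : Type*} [NormedAddCommGroup E] [InnerProductSpace 𝕜 E] {f : ι → E}
    {g : κ → E} (hfg : ∀ i j, inner 𝕜 (f i) (g j) = 0) :
    Submodule.span 𝕜 (Set.range f) ⟂ Submodule.span 𝕜 (Set.range g) := by
  rw [Submodule.isOrtho_span]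
  rintro _ ⟨i, rfl⟩ _ ⟨j, rfl⟩
  exact hfg i j

lemma isOrtho_biSup_of_disjoint [NormedAddCommGroup E] [InnerProductSpace 𝕜 E]
    {W : ι → Submodule 𝕜 E} (hW : Pairwise fun i j ↦ W i ⟂ W j) {A B : Set ι}
    (hAB : Disjoint A B) : (⨆ i ∈ A, W i) ⟂ (⨆ i ∈ B, W i) := by
  simp only [Submodule.isOrtho_iSup_left, Submodule.isOrtho_iSup_right]
  exact fun j hj i hi ↦ hW (hAB.ne_of_mem hi hj)

end Orthogonality

/-- Consensus propagation along the edges of `G`: `P i j l l'` is the message `l → l'` after `j` of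
the `J` iterations of round `i`, and `u i l` is the input of vertex `l` in round `i`. Each round
starts from the final messages of the previous one. Only values at adjacent pairs matter. -/
structure IsConsensusPropagation {L M : Type*} [DecidableEq L] [AddCommMonoid M]
    (G : SimpleGraph L) [G.LocallyFinite] (J : ℕ) (u : ℕ → L → M) (P : ℕ → ℕ → L → L → M) :
    Prop where
  zero_zero : ∀ l l', G.Adj l l' → P 0 0 l l' = 0
  succ_zero : ∀ i l l', G.Adj l l' → P (i + 1) 0 l l' = P i J l l'
  succ : ∀ i j, j < J → ∀ l l', G.Adj l l' →
    P i (j + 1) l l' = u i l + ∑ m ∈ (G.neighborFinset l).erase l', P i j m l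

namespace IsConsensusPropagation

variable {L M : Type*} [DecidableEq L] {G : SimpleGraph L} [G.LocallyFinite] {T J : ℕ}

section Messages

variable [AddCommMonoid M] {u : ℕ → L → M} {P : ℕ → ℕ → L → L → M}

lemma div_zero_of_lt (hP : IsConsensusPropagation G J u P) {t : ℕ} (ht : t < T) {l l' : L}
    (hll' : G.Adj l l') : P (t / T) 0 l l' = 0 := by
  rw [Nat.div_eq_of_lt ht, hP.zero_zero l l' hll']

lemma div_zero_of_le (hP : IsConsensusPropagation G J u P) (hT : 0 < T) {t : ℕ} (ht : T ≤ t)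
    {l l' : L} (hll' : G.Adj l l') : P (t / T) 0 l l' = P ((t - T) / T) J l l' := by
  rw [Nat.div_eq_sub_div hT ht, hP.succ_zero _ l l' hll']

lemma mem_iSup_branch {R : Type*} [Semiring R] [Module R M] (hP : IsConsensusPropagation G J u P)
    (hG : G.IsAcyclic) {W : L → Submodule R M} (hu : ∀ i l, u i l ∈ W l) :
    ∀ (i : ℕ) {j : ℕ}, j ≤ J → ∀ {l l' : L}, G.Adj l l' → P i j l l' ∈ ⨆ m ∈ branch G l l', W m
  | 0, 0, _, l, l', hll' => by
    rw [hP.zero_zero l l' hll']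
    exact Submodule.zero_mem _
  | i + 1, 0, _, l, l', hll' => by
    rw [hP.succ_zero i l l' hll']
    exact hP.mem_iSup_branch hG hu i le_rfl hll'
  | i, j + 1, hj, l, l', hll' => by
    rw [hP.succ i j hj l l' hll']
    refine Submodule.add_mem _ ?_ (Submodule.sum_mem _ fun m hm ↦ ?_)
    · exact Submodule.mem_iSup_of_mem l
        (Submodule.mem_iSup_of_mem (self_mem_branch hll'.ne) (hu i l))
    · rw [Finset.mem_erase, mem_neighborFinset] at hm
      exact biSup_mono (f := W) (branch_subset_branch hG hm.2 hll' hm.1)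
        (hP.mem_iSup_branch hG hu i (Nat.le_of_succ_le hj) hm.2.symm)
  termination_by i j => (i, j)

end Messages

section Covariance

variable {𝕜 : Type*} [RCLike 𝕜] [NormedAddCommGroup M] [InnerProductSpace 𝕜 M]
  {W : L → Submodule 𝕜 M} {u : ℕ → L → M} {P : ℕ → ℕ → L → L → M}

lemma inner_add_sum (hP : IsConsensusPropagation G J u P) (hG : G.IsAcyclic)
    (hW : Pairwise fun l l' ↦ W l ⟂ W l') (hu : ∀ i l, u i l ∈ W l) (i k : ℕ) {j : ℕ}
    (hj : j ≤ J) {l : L} {S : Finset L} (hS : S ⊆ G.neighborFinset l) {x y : M} (hx : x ∈ W l)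
    (hy : y ∈ W l) :
    inner 𝕜 (x + ∑ m ∈ S, P i j m l) (y + ∑ m ∈ S, P k j m l) =
      inner 𝕜 x y + ∑ m ∈ S, inner 𝕜 (P i j m l) (P k j m l) := by
  have adj {m} (hm : m ∈ S) : G.Adj l m := (G.mem_neighborFinset l m).1 (hS hm)
  have message_mem (n) {m} (hm : m ∈ S) : P n j m l ∈ ⨆ v ∈ branch G m l, W v :=
    hP.mem_iSup_branch hG hu n hj (adj hm).symm
  have local_ortho (m) : W l ⟂ ⨆ v ∈ branch G m l, W v := by
    simp only [Submodule.isOrtho_iSup_right]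
    exact fun v hv ↦ hW (ne_of_mem_branch hv)
  refine inner_add_sum_add_sum (fun m hm ↦ ?_) (fun m hm ↦ ?_) fun m hm n hn hmn ↦ ?_
  · exact (local_ortho m).inner_eq hx (message_mem k hm)
  · exact (local_ortho m).symm.inner_eq (message_mem i hm) hy
  · exact (isOrtho_biSup_of_disjoint hW (disjoint_branch hG (adj hm) (adj hn) hmn)).inner_eq
      (message_mem i hm) (message_mem k hn)

lemma inner_succ (hP : IsConsensusPropagation G J u P) (hG : G.IsAcyclic)
    (hW : Pairwise fun l l' ↦ W l ⟂ W l') (hu : ∀ i l, u i l ∈ W l) (i k : ℕ) {j : ℕ}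
    (hj : j < J) {l l' : L} (hll' : G.Adj l l') :
    inner 𝕜 (P i (j + 1) l l') (P k (j + 1) l l') =
      inner 𝕜 (u i l) (u k l) +
        ∑ m ∈ (G.neighborFinset l).erase l', inner 𝕜 (P i j m l) (P k j m l) := by
  rw [hP.succ i j hj l l' hll', hP.succ k j hj l l' hll',
    hP.inner_add_sum hG hW hu i k hj.le (Finset.erase_subset _ _) (hu i l) (hu k l)]

end Covariance

end IsConsensusPropagation

theorem covariance_recursion_tree_general {𝕜 L V : Type*} [RCLike 𝕜] [DecidableEq L]
    {G : SimpleGraph L} [G.LocallyFinite] (hG : G.IsAcyclic) [NormedAddCommGroup V]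
    [InnerProductSpace 𝕜 V] {T J : ℕ} (hT : 0 < T) {w : ℕ → L → V} {ξ : ℕ → L → 𝕜}
    (hξ : ∀ t l, ξ t l ≠ 0) (hw : ∀ s t l l', l' ≠ l → inner 𝕜 (w s l') (w t l) = 0)
    {u : ℕ → L → V} (hu : ∀ i l, u i l = (ξ (i * T) l)⁻¹ • w (i * T) l)
    {P : ℕ → ℕ → L → L → V} (hP : IsConsensusPropagation G J u P) {Htil : ℕ → L → V}
    (hHtil : ∀ t l, Htil t l = (ξ t l)⁻¹ • w t l + ∑ l' ∈ G.neighborFinset l, P (t / T) J l' l)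
    {Sc : ℕ → ℕ → ℕ → L → L → 𝕜}
    (hSc : ∀ τ t j l l', Sc τ t j l l' = inner 𝕜 (P (τ / T) j l l') (P (t / T) j l l')) :
    (∀ τ t l, inner 𝕜 (Htil τ l) (Htil t l) =
        inner 𝕜 (w τ l) (w t l) / (starRingEnd 𝕜 (ξ τ l) * ξ t l) +
          ∑ l' ∈ G.neighborFinset l, Sc τ t J l' l) ∧
      (∀ τ t j, j < J → ∀ l l', G.Adj l l' →
        Sc τ t (j + 1) l l' = inner 𝕜 (u (τ / T) l) (u (t / T) l) +
          ∑ m ∈ (G.neighborFinset l).erase l', Sc τ t j m l) ∧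
      ∀ τ t l l', G.Adj l l' →
        (T ≤ τ → T ≤ t → Sc τ t 0 l l' = Sc (τ - T) (t - T) J l l') ∧
          (τ < T ∨ t < T → Sc τ t 0 l l' = 0) := by
  let W (l : L) : Submodule 𝕜 V := .span 𝕜 (Set.range fun t ↦ w t l)
  have hW : Pairwise fun l l' ↦ W l ⟂ W l' := fun l l' hll' ↦
    isOrtho_span_range fun s t ↦ hw s t l' l hll'
  have scaled_mem (t l) : (ξ t l)⁻¹ • w t l ∈ W l :=
    Submodule.smul_mem _ _ (Submodule.subset_span ⟨t, rfl⟩)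
  have hu_mem (i l) : u i l ∈ W l := hu i l ▸ scaled_mem (i * T) l
  simp only [hSc]
  refine ⟨fun τ t l ↦ ?_, fun τ t j hj l l' hll' ↦ hP.inner_succ hG hW hu_mem _ _ hj hll',
    fun τ t l l' hll' ↦ ⟨fun hτ ht ↦ ?_, ?_⟩⟩
  · rw [hHtil, hHtil, hP.inner_add_sum hG hW hu_mem _ _ le_rfl subset_rfl (scaled_mem τ l)
      (scaled_mem t l), inner_smul_left, inner_smul_right, map_inv₀]
    field_simp [hξ τ l, hξ t l]
  · rw [hP.div_zero_of_le hT hτ hll', hP.div_zero_of_le hT ht hll']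
  · rintro (hτ | ht)
    · rw [hP.div_zero_of_lt hτ hll', inner_zero_left]
    · rw [hP.div_zero_of_lt ht hll', inner_zero_right]

/-- **Theorem 2.** Closed-form covariance recursion on a tree: with round
inputs `u i l = w (iT) l / ξ (iT) l`, consensus-propagation messages `P`, and
`H̃ t l = w t l / ξ t l + ∑_{l' ∈ N(l)} P (⌊t/T⌋) J l' l`, the covariances
`Σ̄_{τ,t}[l] = ⟪H̃ τ l, H̃ t l⟫` and
`Σ̄_{τ,t,j}[l→l'] = ⟪P (⌊τ/T⌋) j l l', P (⌊t/T⌋) j l l'⟫` satisfy, for all `τ ≤ t`,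
`Σ̄_{τ,t}[l] = ⟪w τ l, w t l⟫/(ξ τ l · ξ t l) + ∑_{l'∈N(l)} Σ̄_{τ,t,J}[l'→l]`, and the
per-edge covariances obey the closed recursion
`Σ̄_{τ,t,j}[l→l'] = ⟪u (⌊τ/T⌋) l, u (⌊t/T⌋) l⟫ + ∑_{l̃'∈N(l)\{l'}} Σ̄_{τ,t,j−1}[l̃'→l]`
for `1 ≤ j ≤ J`, with initial condition `Σ̄_{τ,t,0}[l→l'] = Σ̄_{τ−T,t−T,J}[l→l']`
(equal to `0` when `t < T`). -/
theorem covariance_recursion_tree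
    {𝓛 : Type*} [Fintype 𝓛] [DecidableEq 𝓛] (G : SimpleGraph 𝓛) [DecidableRel G.Adj]
    (hG : G.IsTree)
    {V : Type*} [NormedAddCommGroup V] [InnerProductSpace ℝ V]
    (T J : ℕ) (hT : 1 ≤ T) (hJ : 1 ≤ J)
    (w : ℕ → 𝓛 → V) (ξ : ℕ → 𝓛 → ℝ) (hξ : ∀ t l, ξ t l ≠ 0)
    (hw : ∀ s t : ℕ, ∀ l l' : 𝓛, l' ≠ l → ⟪w s l', w t l⟫ = 0)
    (u : ℕ → 𝓛 → V) (hu : ∀ i l, u i l = (ξ (i * T) l)⁻¹ • w (i * T) l)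
    (P : ℕ → ℕ → 𝓛 → 𝓛 → V)
    (hP00 : ∀ l l' : 𝓛, G.Adj l l' → P 0 0 l l' = 0)
    (hPinit : ∀ (i : ℕ) (l l' : 𝓛), G.Adj l l' → P (i + 1) 0 l l' = P i J l l')
    (hPstep : ∀ (i j : ℕ), j < J → ∀ l l' : 𝓛, G.Adj l l' →
      P i (j + 1) l l' = u i l + ∑ l'' ∈ (G.neighborFinset l).erase l', P i j l'' l)
    (Htil : ℕ → 𝓛 → V)
    (hHtil : ∀ (t : ℕ) (l : 𝓛),
      Htil t l = (ξ t l)⁻¹ • w t l + ∑ l' ∈ G.neighborFinset l, P (t / T) J l' l)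
    (Sc : ℕ → ℕ → ℕ → 𝓛 → 𝓛 → ℝ)
    (hSc : ∀ (τ t j : ℕ) (l l' : 𝓛),
      Sc τ t j l l' = ⟪P (τ / T) j l l', P (t / T) j l l'⟫) :
    (∀ (τ t : ℕ), τ ≤ t → ∀ l : 𝓛,
        ⟪Htil τ l, Htil t l⟫ =
          ⟪w τ l, w t l⟫ / (ξ τ l * ξ t l) + ∑ l' ∈ G.neighborFinset l, Sc τ t J l' l)
      ∧ (∀ (τ t : ℕ), τ ≤ t → ∀ j : ℕ, j < J → ∀ l l' : 𝓛, G.Adj l l' →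
          Sc τ t (j + 1) l l' =
            ⟪u (τ / T) l, u (t / T) l⟫ +
              ∑ lt' ∈ (G.neighborFinset l).erase l', Sc τ t j lt' l)
      ∧ (∀ (τ t : ℕ), τ ≤ t → ∀ l l' : 𝓛, G.Adj l l' →
          (T ≤ τ → Sc τ t 0 l l' = Sc (τ - T) (t - T) J l l') ∧
            (t < T → Sc τ t 0 l l' = 0)) := by
  obtain ⟨fused, step, start⟩ :=
    covariance_recursion_tree_general hG.isAcyclic hT hξ hw hu ⟨hP00, hPinit, hPstep⟩ hHtil hSc
  exact ⟨fun τ t _ ↦ fused τ t, fun τ t _ ↦ step τ t, fun τ t hτt l l' hll' ↦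
    ⟨fun hτ ↦ (start τ t l l' hll').1 hτ (hτ.trans hτt), (start τ t l l' hll').2 ∘ .inr⟩⟩
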